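/- (Uniform-distribution accuracy bound.) Let A, Y, W be random variables on a finite probability space with values in finite sets, with A taking values in a finite set 𝒜 with |𝒜| ≥ 2. Let g be a function from the value set of Y into 𝒜, set Acc = 1 − P(g(Y) ≠ A), β = H(A | W) and C = H(Y | W). If β > 0 and log₂(|𝒜| − 1) ≤ β, then Acc ≤ min{ 1, (C + 1) / β }. -/

import Mathlib

open scoped Classical
open Finset

namespace InfoQA

variable {Ω : Type*} [Fintype Ω]

/-- Probability of an event under a pmf `p` on a finite sample space. -/
noncomputable def pr (p : Ω → ℝ) (S : Ω → Prop) : ℝ :=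
  ∑ ω, if S ω then p ω else 0

/-- Distribution of a random variable `X` under `p`. -/
noncomputable def distOf (p : Ω → ℝ) {α : Type*} (X : Ω → α) (a : α) : ℝ :=
  pr p (fun ω => X ω = a)

/-- Shannon entropy of a random variable (logarithm base 2). -/
noncomputable def H (p : Ω → ℝ) {α : Type*} [Fintype α] (X : Ω → α) : ℝ :=
  -∑ a, distOf p X a * Real.logb 2 (distOf p X a)

/-- Conditional entropy `H(X | Z) = H(X, Z) - H(Z)` (base 2). -/
noncomputable def condH (p : Ω → ℝ) {α β : Type*} [Fintype α] [Fintype β]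
    (X : Ω → α) (Z : Ω → β) : ℝ :=
  H p (fun ω => (X ω, Z ω)) - H p Z

/-- Conditional mutual information `I(X ; Y | Z) = H(X | Z) - H(X | (Y, Z))` (base 2). -/
noncomputable def condMI (p : Ω → ℝ) {α β γ : Type*} [Fintype α] [Fintype β] [Fintype γ]
    (X : Ω → α) (Y : Ω → β) (Z : Ω → γ) : ℝ :=
  condH p X Z - condH p X (fun ω => (Y ω, Z ω))

/-- Binary entropy function (base 2); `Real.logb 2 0 = 0`, so `binEnt 0 = binEnt 1 = 0`. -/
noncomputable def binEnt (x : ℝ) : ℝ :=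
  -(x * Real.logb 2 x) - (1 - x) * Real.logb 2 (1 - x)

end InfoQA

open InfoQA

/-!
Revealing `Y` can only increase the information about `A`, so `H(A | W) ≤ H(Y | W) + H(A | Y, W)`.
Fano's inequality bounds the last term by `h(ε) + ε log₂(|𝒜| - 1)`, where `ε` is the error
probability, and under the near-uniformity hypothesis this is at most `h(ε) + ε H(A | W)`.
Moving `ε H(A | W)` to the left gives `(1 - ε) H(A | W) ≤ H(Y | W) + h(ε)`.

Fano's inequality itself is Gibbs' inequality for the reference conditional law that trusts the
guess with probability `1 - ε` and is uniform on the remaining values.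
-/

namespace InfoQA

lemma mul_sub_log_le_sub {x y : ℝ} (hx : 0 ≤ x) (hy : 0 ≤ y) (hxy : x ≠ 0 → y ≠ 0) :
    x * (Real.log y - Real.log x) ≤ y - x := by
  obtain rfl | hx := hx.eq_or_lt
  · simpa using hy
  have hy : 0 < y := hy.lt_of_ne' (hxy hx.ne')
  calc x * (Real.log y - Real.log x) = x * Real.log (y / x) := by
        rw [Real.log_div hy.ne' hx.ne']
    _ ≤ x * (y / x - 1) := by gcongr; exact Real.log_le_sub_one_of_pos (div_pos hy hx)
    _ = y - x := by field_simp

lemma sum_mul_logb_le_sum_mul_logb_self {ι : Type*} {s : Finset ι} {b : ℝ} (hb : 1 < b)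
    {u v : ι → ℝ} (hu : ∀ i ∈ s, 0 ≤ u i) (hv : ∀ i ∈ s, 0 ≤ v i)
    (huv : ∀ i ∈ s, u i ≠ 0 → v i ≠ 0) (hsum : ∑ i ∈ s, v i ≤ ∑ i ∈ s, u i) :
    ∑ i ∈ s, u i * Real.logb b (v i) ≤ ∑ i ∈ s, u i * Real.logb b (u i) := by
  have hlog : ∑ i ∈ s, u i * Real.log (v i) ≤ ∑ i ∈ s, u i * Real.log (u i) := by
    rw [← sub_nonpos, ← sum_sub_distrib]
    calc ∑ i ∈ s, (u i * Real.log (v i) - u i * Real.log (u i))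
        ≤ ∑ i ∈ s, (v i - u i) := sum_le_sum fun i hi => by
          simpa only [mul_sub] using mul_sub_log_le_sub (hu i hi) (hv i hi) (huv i hi)
      _ ≤ 0 := by rw [sum_sub_distrib]; exact sub_nonpos.2 hsum
  simp only [Real.logb, ← mul_div_assoc, ← sum_div]
  exact div_le_div_of_nonneg_right hlog (Real.log_pos hb).le

section Probability

variable {Ω α : Type*} [Fintype Ω] {p : Ω → ℝ}

lemma pr_nonneg (hp : ∀ ω, 0 ≤ p ω) (S : Ω → Prop) : 0 ≤ pr p S :=
  sum_nonneg fun ω _ => ite_nonneg (hp ω) le_rfl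

lemma pr_mono (hp : ∀ ω, 0 ≤ p ω) {S T : Ω → Prop} (hST : ∀ ω, S ω → T ω) : pr p S ≤ pr p T := by
  refine sum_le_sum fun ω _ => ?_
  by_cases hS : S ω
  · rw [if_pos hS, if_pos (hST ω hS)]
  · rw [if_neg hS]
    exact ite_nonneg (hp ω) le_rfl

lemma pr_pos (hp : ∀ ω, 0 ≤ p ω) {S : Ω → Prop} {ω : Ω} (hS : S ω) (hω : p ω ≠ 0) :
    0 < pr p S :=
  sum_pos' (fun ω _ => ite_nonneg (hp ω) le_rfl)
    ⟨ω, mem_univ ω, by rw [if_pos hS]; exact (hp ω).lt_of_ne' hω⟩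

lemma exists_of_pr_ne_zero {S : Ω → Prop} (h : pr p S ≠ 0) : ∃ ω, S ω ∧ p ω ≠ 0 := by
  obtain ⟨ω, -, hω⟩ := exists_ne_zero_of_sum_ne_zero h
  exact ⟨ω, ite_ne_right_iff.1 hω⟩

lemma sum_mul_ite_eq_pr (p : Ω → ℝ) (S : Ω → Prop) (x y : ℝ) :
    ∑ ω, p ω * (if S ω then x else y) = pr p S * x + pr p (fun ω => ¬S ω) * y := by
  simp only [pr, sum_mul, ← sum_add_distrib]
  refine sum_congr rfl fun ω _ => ?_
  by_cases hS : S ω <;> simp [hS]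

lemma pr_add_pr_not (p : Ω → ℝ) (S : Ω → Prop) :
    pr p S + pr p (fun ω => ¬S ω) = ∑ ω, p ω := by
  simpa using (sum_mul_ite_eq_pr p S 1 1).symm

lemma one_sub_pr_not (hsum : ∑ ω, p ω = 1) (S : Ω → Prop) :
    1 - pr p (fun ω => ¬S ω) = pr p S := by
  rw [← hsum, ← pr_add_pr_not p S, add_sub_cancel_right]

lemma pr_le_one (hp : ∀ ω, 0 ≤ p ω) (hsum : ∑ ω, p ω = 1) (S : Ω → Prop) : pr p S ≤ 1 := by
  rw [← one_sub_pr_not hsum S]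
  exact sub_le_self 1 (pr_nonneg hp _)

lemma distOf_nonneg (hp : ∀ ω, 0 ≤ p ω) (X : Ω → α) (a : α) : 0 ≤ distOf p X a :=
  pr_nonneg hp _

lemma distOf_apply_pos (hp : ∀ ω, 0 ≤ p ω) (X : Ω → α) {ω : Ω} (hω : p ω ≠ 0) :
    0 < distOf p X (X ω) :=
  pr_pos hp rfl hω

variable [Fintype α]

lemma sum_distOf_mul (p : Ω → ℝ) (X : Ω → α) (f : α → ℝ) :
    ∑ a, distOf p X a * f a = ∑ ω, p ω * f (X ω) := by
  simp only [distOf, pr, sum_mul]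
  rw [sum_comm]
  simp [ite_mul]

lemma sum_distOf (p : Ω → ℝ) (X : Ω → α) : ∑ a, distOf p X a = ∑ ω, p ω := by
  simpa using sum_distOf_mul p X fun _ => 1

end Probability

section Entropy

variable {Ω α β ζ : Type*} [Fintype Ω] [Fintype α] [Fintype β] [Fintype ζ] {p : Ω → ℝ}

lemma H_eq_neg_sum (p : Ω → ℝ) (X : Ω → α) :
    H p X = -∑ ω, p ω * Real.logb 2 (distOf p X (X ω)) := by
  rw [H, sum_distOf_mul p X fun a => Real.logb 2 (distOf p X a)]

lemma H_comp_le (hp : ∀ ω, 0 ≤ p ω) (X : Ω → α) (f : α → β) :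
    H p (fun ω => f (X ω)) ≤ H p X := by
  rw [H_eq_neg_sum, H_eq_neg_sum, neg_le_neg_iff]
  refine sum_le_sum fun ω _ => ?_
  obtain hω | hω := eq_or_ne (p ω) 0
  · simp [hω]
  · exact mul_le_mul_of_nonneg_left (Real.logb_le_logb_of_le one_lt_two
      (distOf_apply_pos hp X hω) (pr_mono hp fun _ => congrArg f)) (hp ω)

lemma condH_le_condH_add_condH (hp : ∀ ω, 0 ≤ p ω) (X : Ω → α) (Y : Ω → β) (Z : Ω → ζ) :
    condH p X Z ≤ condH p Y Z + condH p X (fun ω => (Y ω, Z ω)) := by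
  have hdrop : H p (fun ω => (X ω, Z ω)) ≤ H p (fun ω => (X ω, (Y ω, Z ω))) :=
    H_comp_le hp (fun ω => (X ω, (Y ω, Z ω))) fun x => (x.1, x.2.2)
  simp only [condH]
  linarith

lemma H_le_neg_sum_mul_logb (hp : ∀ ω, 0 ≤ p ω) (X : Ω → α) {q : α → ℝ} (hq : ∀ a, 0 ≤ q a)
    (hq_sum : ∑ a, q a ≤ ∑ ω, p ω) (hq_supp : ∀ ω, p ω ≠ 0 → q (X ω) ≠ 0) :
    H p X ≤ -∑ ω, p ω * Real.logb 2 (q (X ω)) := by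
  rw [← sum_distOf_mul p X fun a => Real.logb 2 (q a)]
  refine neg_le_neg (sum_mul_logb_le_sum_mul_logb_self one_lt_two
    (fun a _ => distOf_nonneg hp X a) (fun a _ => hq a) (fun a _ ha => ?_) ?_)
  · obtain ⟨ω, rfl, hω⟩ := exists_of_pr_ne_zero ha
    exact hq_supp ω hω
  · rwa [sum_distOf]

lemma condH_le_neg_sum_mul_logb (hp : ∀ ω, 0 ≤ p ω) (X : Ω → α) (Z : Ω → ζ) {k : ζ → α → ℝ}
    (hk : ∀ z a, 0 ≤ k z a) (hk_sum : ∀ z, ∑ a, k z a ≤ 1)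
    (hk_supp : ∀ ω, p ω ≠ 0 → k (Z ω) (X ω) ≠ 0) :
    condH p X Z ≤ -∑ ω, p ω * Real.logb 2 (k (Z ω) (X ω)) := by
  have hmass : ∑ x : α × ζ, distOf p Z x.2 * k x.2 x.1 ≤ ∑ ω, p ω := by
    simp only [Fintype.sum_prod_type_right, ← mul_sum, ← sum_distOf p Z]
    exact sum_le_sum fun z _ => mul_le_of_le_one_right (distOf_nonneg hp Z z) (hk_sum z)
  have hjoint := H_le_neg_sum_mul_logb hp (fun ω => (X ω, Z ω))
    (fun x => mul_nonneg (distOf_nonneg hp Z x.2) (hk x.2 x.1)) hmass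
    fun ω hω => mul_ne_zero (distOf_apply_pos hp Z hω).ne' (hk_supp ω hω)
  have hsplit : ∀ ω, p ω * Real.logb 2 (distOf p Z (Z ω) * k (Z ω) (X ω)) =
      p ω * Real.logb 2 (distOf p Z (Z ω)) + p ω * Real.logb 2 (k (Z ω) (X ω)) := fun ω => by
    obtain hω | hω := eq_or_ne (p ω) 0
    · simp [hω]
    · rw [Real.logb_mul (distOf_apply_pos hp Z hω).ne' (hk_supp ω hω), mul_add]
  simp only [hsplit, sum_add_distrib] at hjoint
  rw [condH, H_eq_neg_sum p Z]
  linarith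

lemma binEnt_eq_binEntropy_div_log_two (x : ℝ) : binEnt x = Real.binEntropy x / Real.log 2 := by
  simp only [binEnt, Real.binEntropy_eq_negMulLog_add_negMulLog_one_sub, Real.negMulLog, Real.logb]
  ring

lemma binEnt_le_one (x : ℝ) : binEnt x ≤ 1 := by
  rw [binEnt_eq_binEntropy_div_log_two, div_le_one (Real.log_pos one_lt_two)]
  exact Real.binEntropy_le_log_two

end Entropy

section Fano

variable {Ω α ζ : Type*} [Fintype Ω] [Fintype α] [Fintype ζ] {p : Ω → ℝ}

/-- The law on `α` with mass `1 - ε` at the guess `c` and the mass `ε` spread evenly over the other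
values: the reference law in Fano's inequality. If `α` has only one element, division by zero makes
the mass `ε` disappear, so in general this is a subprobability. -/
noncomputable def noisyGuess (ε : ℝ) (c a : α) : ℝ :=
  if c = a then 1 - ε else ε / ((Fintype.card α : ℝ) - 1)

lemma noisyGuess_nonneg {ε : ℝ} (hε₀ : 0 ≤ ε) (hε₁ : ε ≤ 1) (c a : α) :
    0 ≤ noisyGuess ε c a := by
  have hcard : (1 : ℝ) ≤ Fintype.card α := mod_cast Fintype.card_pos_iff.2 ⟨c⟩
  exact ite_nonneg (sub_nonneg.2 hε₁) (div_nonneg hε₀ (sub_nonneg.2 hcard))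

lemma sum_noisyGuess_le_one {ε : ℝ} (hε : 0 ≤ ε) (c : α) : ∑ a, noisyGuess ε c a ≤ 1 := by
  have hcard : ((univ.erase c).card : ℝ) = Fintype.card α - 1 := by
    rw [cast_card_erase_of_mem (mem_univ c), card_univ]
  have herase : ∑ a ∈ univ.erase c, noisyGuess ε c a =
      (Fintype.card α - 1) * (ε / ((Fintype.card α : ℝ) - 1)) :=
    (sum_eq_card_nsmul fun a ha => if_neg (ne_of_mem_erase ha).symm).trans
      (by rw [nsmul_eq_mul, hcard])
  calc ∑ a, noisyGuess ε c a
      = 1 - ε + ε * (((Fintype.card α : ℝ) - 1) / (Fintype.card α - 1)) := by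
        rw [← add_sum_erase univ _ (mem_univ c), herase, mul_div_left_comm, noisyGuess, if_pos rfl]
    _ ≤ 1 - ε + ε := by gcongr; exact mul_le_of_le_one_right hε (div_self_le_one _)
    _ = 1 := sub_add_cancel 1 ε

lemma one_lt_card_of_pr_ne_ne_zero {c X : Ω → α} (h : pr p (fun ω => c ω ≠ X ω) ≠ 0) :
    1 < Fintype.card α :=
  let ⟨ω, hne, _⟩ := exists_of_pr_ne_zero h
  Fintype.one_lt_card_iff.2 ⟨c ω, X ω, hne⟩

lemma neg_sum_mul_logb_noisyGuess (hsum : ∑ ω, p ω = 1) {c X : Ω → α} {ε : ℝ}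
    (hε : pr p (fun ω => c ω ≠ X ω) = ε) :
    -∑ ω, p ω * Real.logb 2 (noisyGuess ε (c ω) (X ω)) =
      binEnt ε + ε * Real.logb 2 ((Fintype.card α : ℝ) - 1) := by
  have hcorrect : pr p (fun ω => c ω = X ω) = 1 - ε := by
    rw [← hε, ← one_sub_pr_not hsum]
  have hlog : ε * Real.logb 2 (ε / ((Fintype.card α : ℝ) - 1)) =
      ε * Real.logb 2 ε - ε * Real.logb 2 ((Fintype.card α : ℝ) - 1) := by
    obtain rfl | hε₀ := eq_or_ne ε 0
    · simp
    have hcard : (1 : ℝ) < Fintype.card α := mod_cast one_lt_card_of_pr_ne_ne_zero (hε ▸ hε₀)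
    rw [Real.logb_div hε₀ (sub_pos.2 hcard).ne', mul_sub]
  simp only [noisyGuess, apply_ite (Real.logb 2), sum_mul_ite_eq_pr, hcorrect, ← ne_eq, hε, hlog,
    binEnt]
  ring

lemma noisyGuess_ne_zero (hp : ∀ ω, 0 ≤ p ω) (hsum : ∑ ω, p ω = 1) {c X : Ω → α} {ω : Ω}
    (hω : p ω ≠ 0) : noisyGuess (pr p fun ω => c ω ≠ X ω) (c ω) (X ω) ≠ 0 := by
  by_cases h : c ω = X ω
  · rw [noisyGuess, if_pos h, one_sub_pr_not hsum fun ω => c ω = X ω]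
    exact (pr_pos hp h hω).ne'
  · have herror : pr p (fun ω => c ω ≠ X ω) ≠ 0 := (pr_pos hp h hω).ne'
    have hcard : (1 : ℝ) < Fintype.card α := mod_cast one_lt_card_of_pr_ne_ne_zero herror
    rw [noisyGuess, if_neg h]
    exact div_ne_zero herror (sub_pos.2 hcard).ne'

lemma condH_le_binEnt_add_mul_logb (hp : ∀ ω, 0 ≤ p ω) (hsum : ∑ ω, p ω = 1)
    (X : Ω → α) (Z : Ω → ζ) (g : ζ → α) :
    condH p X Z ≤ binEnt (pr p fun ω => g (Z ω) ≠ X ω) +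
      (pr p fun ω => g (Z ω) ≠ X ω) * Real.logb 2 ((Fintype.card α : ℝ) - 1) := by
  set ε := pr p fun ω => g (Z ω) ≠ X ω with hε
  have hε₀ : 0 ≤ ε := pr_nonneg hp _
  have hε₁ : ε ≤ 1 := pr_le_one hp hsum _
  calc condH p X Z ≤ -∑ ω, p ω * Real.logb 2 (noisyGuess ε (g (Z ω)) (X ω)) :=
        condH_le_neg_sum_mul_logb hp X Z (fun z => noisyGuess_nonneg hε₀ hε₁ (g z))
          (fun z => sum_noisyGuess_le_one hε₀ (g z)) fun _ => noisyGuess_ne_zero hp hsum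
    _ = _ := neg_sum_mul_logb_noisyGuess hsum hε.symm

end Fano

end InfoQA

theorem uniform_accuracy_bound_general
    {Ω 𝒜 𝒴 𝒲 : Type*} [Fintype Ω] [Fintype 𝒜] [Fintype 𝒴] [Fintype 𝒲]
    (p : Ω → ℝ) (hp : ∀ ω, 0 ≤ p ω) (hsum : ∑ ω, p ω = 1)
    (A : Ω → 𝒜) (Y : Ω → 𝒴) (W : Ω → 𝒲) (g : 𝒴 → 𝒲 → 𝒜)
    (hβpos : 0 < condH p A W)
    (hlog : Real.logb 2 ((Fintype.card 𝒜 : ℝ) - 1) ≤ condH p A W) :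
    1 - pr p (fun ω => g (Y ω) (W ω) ≠ A ω) ≤
      min 1 ((condH p Y W + binEnt (pr p fun ω => g (Y ω) (W ω) ≠ A ω)) / condH p A W) := by
  set ε := pr p fun ω => g (Y ω) (W ω) ≠ A ω
  have hε₀ : 0 ≤ ε := pr_nonneg hp _
  have hchain : condH p A W ≤ condH p Y W + condH p A (fun ω => (Y ω, W ω)) :=
    condH_le_condH_add_condH hp A Y W
  have hfano : condH p A (fun ω => (Y ω, W ω)) ≤
      binEnt ε + ε * Real.logb 2 ((Fintype.card 𝒜 : ℝ) - 1) :=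
    condH_le_binEnt_add_mul_logb hp hsum A (fun ω => (Y ω, W ω)) fun z => g z.1 z.2
  have hscale : ε * Real.logb 2 ((Fintype.card 𝒜 : ℝ) - 1) ≤ ε * condH p A W :=
    mul_le_mul_of_nonneg_left hlog hε₀
  refine le_min (by linarith) ((le_div_iff₀ hβpos).2 ?_)
  linarith

/-- Uniform-distribution accuracy bound: if `β > 0` and `log₂(|𝒜| − 1) ≤ β`, then
`Acc ≤ min{1, (C + 1) / β}` where `β = H(A | W)` and `C = H(Y | W)`. -/
theorem uniform_accuracy_bound
    {Ω 𝒜 𝒴 𝒲 : Type*} [Fintype Ω] [Fintype 𝒜] [Fintype 𝒴] [Fintype 𝒲]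
    (p : Ω → ℝ) (hp : ∀ ω, 0 ≤ p ω) (hsum : ∑ ω, p ω = 1)
    (hcard : 2 ≤ Fintype.card 𝒜)
    (A : Ω → 𝒜) (Y : Ω → 𝒴) (W : Ω → 𝒲) (g : 𝒴 → 𝒜)
    (hβpos : 0 < condH p A W)
    (hlog : Real.logb 2 ((Fintype.card 𝒜 : ℝ) - 1) ≤ condH p A W) :
    1 - pr p (fun ω => g (Y ω) ≠ A ω) ≤
      min 1 ((condH p Y W + 1) / condH p A W) := by
  refine (uniform_accuracy_bound_general p hp hsum A Y W (fun y _ => g y) hβpos hlog).trans ?_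
  gcongr
  exact binEnt_le_one _
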